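/- arXiv:2504.00276 — 2 statements merged into one kernel-verified Lean document; each statement's English description precedes it below -/
import Mathlib

section
/- Let d, N, Q be positive integers, let φ : ℝ^d → ℝ be an even function, let z⁽¹⁾, …, z⁽ᴺ⁾ ∈ ℝ^d be pairwise distinct points, and let q₁, …, q_Q : ℝ^d → ℝ be functions such that the N × Q matrix P with entries P_{ij} = q_j(z⁽ⁱ⁾) has linearly independent columns. Define the N × N matrix R by R_{ij} = φ(z⁽ⁱ⁾ − z⁽ʲ⁾). Suppose φ is conditionally positive definite with respect to (q₁,…,q_Q) at the points z⁽¹⁾,…,z⁽ᴺ⁾, i.e., for every nonzero α ∈ ℝᴺ with Σ_{i=1}^{N} α_i q_k(z⁽ⁱ⁾) = 0 for all k ∈ {1,…,Q}, it holds that Σ_{i=1}^{N} Σ_{j=1}^{N} α_i α_j φ(z⁽ⁱ⁾ − z⁽ʲ⁾) > 0. Then for every family of target values m₁, …, m_N ∈ ℝ there exist unique coefficients α ∈ ℝᴺ and β ∈ ℝ^Q such that the interpolant I(z) = Σ_{i=1}^{N} α_i φ(z − z⁽ⁱ⁾) + Σ_{k=1}^{Q} β_k q_k(z) satisfies I(z⁽ʲ⁾)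 = m_j for all j ∈ {1,…,N} and the side conditions Σ_{i=1}^{N} α_i q_k(z⁽ⁱ⁾) = 0 hold for all k ∈ {1,…,Q}. -/
/-!
The interpolation and side conditions form a square linear system in `(α, β)`, with `N + Q`
equations and unknowns, so it suffices that the homogeneous system has only the trivial solution.
Pairing the homogeneous interpolation equations with `α` kills the `β`-part by the side conditions
and leaves `Σᵢ Σⱼ αᵢ αⱼ φ(z⁽ⁱ⁾ − z⁽ʲ⁾) = 0`, so `α = 0` by conditional positive definiteness; the
linear independence of the columns of `P` then gives `β = 0`.
-/

/-- RBF interpolation with a polynomial tail: if `φ` is even and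
conditionally positive definite w.r.t. `q₁,…,q_Q` at the pairwise distinct points
`z⁽¹⁾,…,z⁽ᴺ⁾`, and the matrix `P = (q_j(z⁽ⁱ⁾))` has linearly independent columns,
then for any target values `m₁,…,m_N` there exist unique coefficients `α, β` such
that `I(z) = Σᵢ αᵢ φ(z − z⁽ⁱ⁾) + Σₖ βₖ qₖ(z)` interpolates the data and satisfies
the side conditions `Σᵢ αᵢ qₖ(z⁽ⁱ⁾) = 0`. -/
theorem stmt_9 (d N Q : ℕ) (hd : 0 < d) (hN : 0 < N) (hQ : 0 < Q)
    (φ : EuclideanSpace ℝ (Fin d) → ℝ) (heven : ∀ z, φ (-z) = φ z)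
    (z : Fin N → EuclideanSpace ℝ (Fin d)) (hz : Function.Injective z)
    (q : Fin Q → EuclideanSpace ℝ (Fin d) → ℝ)
    (hP : ∀ β : Fin Q → ℝ, (∀ i, ∑ k, β k * q k (z i) = 0) → β = 0)
    (hcpd : ∀ α : Fin N → ℝ, α ≠ 0 → (∀ k, ∑ i, α i * q k (z i) = 0) →
      0 < ∑ i, ∑ j, α i * α j * φ (z i - z j))
    (m : Fin N → ℝ) :
    ∃! αβ : (Fin N → ℝ) × (Fin Q → ℝ),
      (∀ j, (∑ i, αβ.1 i * φ (z j - z i)) + ∑ k, αβ.2 k * q k (z j) = m j) ∧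
      (∀ k, ∑ i, αβ.1 i * q k (z i) = 0) := by
  let L : ((Fin N → ℝ) × (Fin Q → ℝ)) →ₗ[ℝ] ((Fin N → ℝ) × (Fin Q → ℝ)) :=
    { toFun := fun x =>
        (fun j => (∑ i, x.1 i * φ (z j - z i)) + ∑ k, x.2 k * q k (z j),
          fun k => ∑ i, x.1 i * q k (z i))
      map_add' := by
        intro x y
        ext j
        · simp only [Prod.fst_add, Prod.snd_add, Pi.add_apply, add_mul, Finset.sum_add_distrib]
          ring
        · simp only [Prod.fst_add, Prod.snd_add, Pi.add_apply, add_mul, Finset.sum_add_distrib]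
      map_smul' := by
        intro c x
        ext j <;> simp [Finset.mul_sum, mul_add, mul_assoc] }
  have hinj : Function.Injective L := by
    rw [injective_iff_map_eq_zero]
    rintro ⟨α, β⟩ h
    have h1 : ∀ j, (∑ i, α i * φ (z j - z i)) + ∑ k, β k * q k (z j) = 0 :=
      fun j => congrFun (congrArg Prod.fst h) j
    have h2 : ∀ k, ∑ i, α i * q k (z i) = 0 := fun k => congrFun (congrArg Prod.snd h) k
    have hcross : ∑ j, α j * ∑ k, β k * q k (z j) = 0 := by
      calc ∑ j, α j * ∑ k, β k * q k (z j) = ∑ k, β k * ∑ j, α j * q k (z j) := by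
            simp only [Finset.mul_sum]
            rw [Finset.sum_comm]
            simp only [mul_left_comm]
        _ = 0 := by simp [h2]
    have hquad : ∑ i, ∑ j, α i * α j * φ (z i - z j) = 0 := by
      calc ∑ i, ∑ j, α i * α j * φ (z i - z j)
          = ∑ j, α j * ((∑ i, α i * φ (z j - z i)) + ∑ k, β k * q k (z j)) := by
            simp only [mul_add, Finset.sum_add_distrib, hcross, add_zero]
            simp only [Finset.mul_sum, mul_assoc]
        _ = 0 := by simp [h1]
    have hα : α = 0 := by
      by_contra hne
      exact (hcpd α hne h2).ne' hquad
    subst hα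
    have hβ : β = 0 := hP β fun i => by simpa using h1 i
    rw [hβ]
    rfl
  have hiff : ∀ x, L x = (m, 0) ↔
      (∀ j, (∑ i, x.1 i * φ (z j - z i)) + ∑ k, x.2 k * q k (z j) = m j) ∧
      (∀ k, ∑ i, x.1 i * q k (z i) = 0) := fun x => by
    simp [L, Prod.ext_iff, funext_iff]
  simp only [← hiff]
  exact Function.Bijective.existsUnique ⟨hinj, LinearMap.injective_iff_surjective.mp hinj⟩ (m, 0)
end

section
/- Let f : ℝ^{nx} × ℝ^{nu} × ℝ^{nη} → ℝ^{nx} be continuously differentiable with partial Fréchet derivative L_f(x, u, η) with respect to (x, u), fix η ∈ ℝ^{nη} with f(0, 0, η) = 0, and fix (x, u) ∈ ℝ^{nx} × ℝ^{nu}. Let I : ℝ^{nx} × ℝ^{nu} × ℝ^{nη} → (ℝ^{nx} × ℝ^{nu} →L ℝ^{nx}) be a continuous map and let ε ≥ 0 be such that ‖L_f(λx, λu, η) − I(λx, λu, η)‖ ≤ ε for all λ ∈ [0,1], where ‖·‖ is the operator norm. Define the surrogate value f̂ = (∫_{0}^{1} I(λx, λu, η) dλ)(x, u). Then ‖f(x,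 u, η) − f̂‖ ≤ ε · ‖(x, u)‖. -/
/-!
Since `f (0, 0, η) = 0`, the fundamental theorem of calculus along the segment `l ↦ (l • x, l • u)`
gives `f (x, u, η) = ∫₀¹ L (l • x) (l • u) η (x, u) dl`. Evaluation at `(x, u)` commutes with the
integral of the continuous map `I`, so the error is `∫₀¹ (L - I) (x, u) dl`, whose integrand has norm
at most `ε * ‖(x, u)‖`. The norm on the product is Mathlib's, the maximum of the two Euclidean
norms, both for `‖(x, u)‖` and for the operator norm in the hypothesis.
-/

/-- Error bound for the on-the-fly surrogate: if `f(0,0,η) = 0`,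
`I` is a continuous interpolant with `‖L_f(λx,λu,η) − I(λx,λu,η)‖ ≤ ε` for all
`λ ∈ [0,1]`, and `f̂ = (∫₀¹ I(λx,λu,η) dλ)(x,u)`, then
`‖f(x,u,η) − f̂‖ ≤ ε ‖(x,u)‖`. -/
theorem stmt_10 (nx nu nη : ℕ) (hnx : 0 < nx) (hnu : 0 < nu) (hnη : 0 < nη)
    (f : EuclideanSpace ℝ (Fin nx) × EuclideanSpace ℝ (Fin nu) × EuclideanSpace ℝ (Fin nη) →
      EuclideanSpace ℝ (Fin nx))
    (hf : ContDiff ℝ 1 f)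
    (L : EuclideanSpace ℝ (Fin nx) → EuclideanSpace ℝ (Fin nu) → EuclideanSpace ℝ (Fin nη) →
      (EuclideanSpace ℝ (Fin nx) × EuclideanSpace ℝ (Fin nu)) →L[ℝ] EuclideanSpace ℝ (Fin nx))
    (hL : ∀ x u η, L x u η =
      fderiv ℝ (fun p : EuclideanSpace ℝ (Fin nx) × EuclideanSpace ℝ (Fin nu) =>
        f (p.1, p.2, η)) (x, u))
    (η : EuclideanSpace ℝ (Fin nη)) (heq : f (0, 0, η) = 0)
    (x : EuclideanSpace ℝ (Fin nx)) (u : EuclideanSpace ℝ (Fin nu))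
    (I : EuclideanSpace ℝ (Fin nx) × EuclideanSpace ℝ (Fin nu) × EuclideanSpace ℝ (Fin nη) →
      (EuclideanSpace ℝ (Fin nx) × EuclideanSpace ℝ (Fin nu)) →L[ℝ] EuclideanSpace ℝ (Fin nx))
    (hI : Continuous I) (ε : ℝ) (hε : 0 ≤ ε)
    (hbound : ∀ l ∈ Set.Icc (0:ℝ) 1, ‖L (l • x) (l • u) η - I (l • x, l • u, η)‖ ≤ ε) :
    ‖f (x, u, η) - (∫ l in (0:ℝ)..1, I (l • x, l • u, η)) (x, u)‖ ≤ ε * ‖(x, u)‖ := by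
  set g : EuclideanSpace ℝ (Fin nx) × EuclideanSpace ℝ (Fin nu) → EuclideanSpace ℝ (Fin nx) :=
    fun p => f (p.1, p.2, η) with hg
  have hgC : ContDiff ℝ 1 g := hf.comp (by fun_prop)
  have hseg : Continuous fun l : ℝ => l • (x, u) := by fun_prop
  have hLcont : Continuous fun l : ℝ => fderiv ℝ g (l • (x, u)) (x, u) :=
    ((hgC.continuous_fderiv one_ne_zero).comp hseg).clm_apply continuous_const
  have hIcont : Continuous fun l : ℝ => I (l • x, l • u, η) := hI.comp (by fun_prop)
  have hderiv : ∀ l : ℝ, HasDerivAt (fun l : ℝ => g (l • (x, u)))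
      (fderiv ℝ g (l • (x, u)) (x, u)) l := fun l => by
    have h : HasDerivAt (fun l : ℝ => l • (x, u)) (x, u) l := by
      simpa using (hasDerivAt_id l).smul_const (x, u)
    exact ((hgC.differentiable one_ne_zero) (l • (x, u))).hasFDerivAt.comp_hasDerivAt l h
  have hftc : ∫ l in (0:ℝ)..1, fderiv ℝ g (l • (x, u)) (x, u) = f (x, u, η) := by
    rw [intervalIntegral.integral_eq_sub_of_hasDerivAt (fun l _ => hderiv l)
      (hLcont.intervalIntegrable 0 1)]
    simp [hg, heq]
  rw [← hftc, ContinuousLinearMap.intervalIntegral_apply (hIcont.intervalIntegrable 0 1),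
    ← intervalIntegral.integral_sub (hLcont.intervalIntegrable 0 1)
      ((hIcont.clm_apply continuous_const).intervalIntegrable 0 1)]
  have hpt : ∀ l ∈ Set.uIoc (0:ℝ) 1,
      ‖fderiv ℝ g (l • (x, u)) (x, u) - I (l • x, l • u, η) (x, u)‖ ≤ ε * ‖(x, u)‖ := by
    intro l hl
    rw [Set.uIoc_of_le zero_le_one] at hl
    have hb := hbound l ⟨hl.1.le, hl.2⟩
    rw [hL] at hb
    exact ContinuousLinearMap.le_of_opNorm_le _ hb (x, u)
  simpa using intervalIntegral.norm_integral_le_of_norm_le_const hpt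
end
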